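/- arXiv:2402.00964 — 4 statements merged into one kernel-verified Lean document; each statement's English description precedes it below -/
import Mathlib

section
/- For all processes p and q of labeled transition systems over an alphabet A with partition {A^r, A^l, A^bi}: p ≲_CC q if and only if p ≼_CC q, i.e., there exists a covariant-contravariant simulation relating p to q if and only if every formula of L_CC satisfied by p is also satisfied by q. -/
/-!
Soundness is an induction on the formula: a simulation carries satisfaction from left to right,
the forward clause handling `⟨a⟩` and the backward clause handling `[a]`.

Completeness is the Hennessy–Milner argument: the logical preorder is itself a
covariant-contravariant simulation. If no `a`-successor of `q` is logically above the
`a`-successor `p'` of `p`, pick for each of them a formula true at `p'` and false there; `⟨a⟩` of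
the conjunction of these formulas holds at `p` and fails at `q`. Dually, if no `a`-successor of
`p` is logically below the `a`-successor `q'` of `q`, `[a]` of the disjunction of formulas
separating them from `q'` holds at `p` and fails at `q`. Arbitrary index sets in the formulas
make finite branching unnecessary.
-/

/-- A covariant-contravariant simulation between two LTSs with transition
relations `trP` and `trQ`, w.r.t. the partition `{Ar, Al, Abi}` of the alphabet. -/
def CCSim {P Q A : Type} (Ar Al Abi : Set A)
    (trP : P → A → P → Prop) (trQ : Q → A → Q → Prop) (S : P → Q → Prop) : Prop :=
  ∀ p q, S p q →
    (∀ a ∈ Ar ∪ Abi, ∀ p', trP p a p' → ∃ q', trQ q a q' ∧ S p' q') ∧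
    (∀ a ∈ Al ∪ Abi, ∀ q', trQ q a q' → ∃ p', trP p a p' ∧ S p' q')

/-- The class `L_CC` of covariant-contravariant simulation formulas:
`tt`, `ff`, set-indexed conjunctions and disjunctions, `⟨a⟩φ` for
`a ∈ Ar ∪ Abi` and `[a]φ` for `a ∈ Al ∪ Abi`. -/
inductive LCC (A : Type) (Ar Al Abi : Set A) : Type 1 where
  | tt : LCC A Ar Al Abi
  | ff : LCC A Ar Al Abi
  | conj (I : Type) (f : I → LCC A Ar Al Abi) : LCC A Ar Al Abi
  | disj (I : Type) (f : I → LCC A Ar Al Abi) : LCC A Ar Al Abi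
  | dia (a : A) (h : a ∈ Ar ∪ Abi) (φ : LCC A Ar Al Abi) : LCC A Ar Al Abi
  | box (a : A) (h : a ∈ Al ∪ Abi) (φ : LCC A Ar Al Abi) : LCC A Ar Al Abi

/-- Satisfaction relation for `L_CC`. -/
def SatCC {P A : Type} {Ar Al Abi : Set A} (tr : P → A → P → Prop) :
    P → LCC A Ar Al Abi → Prop
  | _, .tt => True
  | _, .ff => False
  | p, .conj _ f => ∀ i, SatCC tr p (f i)
  | p, .disj _ f => ∃ i, SatCC tr p (f i)
  | p, .dia a _ φ => ∃ p', tr p a p' ∧ SatCC tr p' φ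
  | p, .box a _ φ => ∀ p', tr p a p' → SatCC tr p' φ

theorem CCSim.preserves_sat {P Q A : Type} {Ar Al Abi : Set A}
    {trP : P → A → P → Prop} {trQ : Q → A → Q → Prop} {S : P → Q → Prop}
    (hS : CCSim Ar Al Abi trP trQ S) (φ : LCC A Ar Al Abi) :
    ∀ p q, S p q → SatCC trP p φ → SatCC trQ q φ := by
  induction φ with
  | tt => intro p q _ _; simp only [SatCC]
  | ff => intro p q _ h; simp only [SatCC] at h
  | conj I f ih =>
    intro p q hpq h
    simp only [SatCC] at h ⊢
    exact fun i => ih i p q hpq (h i)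
  | disj I f ih =>
    intro p q hpq h
    simp only [SatCC] at h ⊢
    obtain ⟨i, hi⟩ := h
    exact ⟨i, ih i p q hpq hi⟩
  | dia a ha φ ih =>
    intro p q hpq h
    simp only [SatCC] at h ⊢
    obtain ⟨p', hp', hφ⟩ := h
    obtain ⟨q', hq', hS'⟩ := (hS p q hpq).1 a ha p' hp'
    exact ⟨q', hq', ih p' q' hS' hφ⟩
  | box a ha φ ih =>
    intro p q hpq h
    simp only [SatCC] at h ⊢
    intro q' hq'
    obtain ⟨p', hp', hS'⟩ := (hS p q hpq).2 a ha q' hq'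
    exact ih p' q' hS' (h p' hp')

theorem ccSim_logical_preorder {P Q A : Type} (Ar Al Abi : Set A)
    (trP : P → A → P → Prop) (trQ : Q → A → Q → Prop) :
    CCSim Ar Al Abi trP trQ
      (fun p q => ∀ φ : LCC A Ar Al Abi, SatCC trP p φ → SatCC trQ q φ) := by
  intro p q hpq
  constructor
  · intro a ha p' hp'
    by_contra! hcon
    choose f hfp hfq using hcon
    have hq := hpq (.dia a ha (.conj {q' // trQ q a q'} fun x => f x.1 x.2))
    simp only [SatCC] at hq
    obtain ⟨q', hq', hsat⟩ := hq ⟨p', hp', fun x => hfp x.1 x.2⟩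
    exact hfq q' hq' (hsat ⟨q', hq'⟩)
  · intro a ha q' hq'
    by_contra! hcon
    choose f hfp hfq using hcon
    have hq := hpq (.box a ha (.disj {p' // trP p a p'} fun x => f x.1 x.2))
    simp only [SatCC] at hq
    obtain ⟨x, hx⟩ := hq (fun p' hp' => ⟨⟨p', hp'⟩, hfp p' hp'⟩) q' hq'
    exact hfq x.1 x.2 hx

/-- Logical characterization of covariant-contravariant simulation:
`p ≲_CC q` iff every formula of `L_CC` satisfied by `p` is satisfied by `q`. -/
theorem ccSim_iff_logic {P Q A : Type} (Ar Al Abi : Set A)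
    (hrl : Disjoint Ar Al) (hrbi : Disjoint Ar Abi) (hlbi : Disjoint Al Abi)
    (hcover : Ar ∪ Al ∪ Abi = Set.univ)
    (trP : P → A → P → Prop) (trQ : Q → A → Q → Prop) (p : P) (q : Q) :
    (∃ S, CCSim Ar Al Abi trP trQ S ∧ S p q) ↔
      (∀ φ : LCC A Ar Al Abi, SatCC trP p φ → SatCC trQ q φ) := by
  constructor
  · rintro ⟨S, hS, hpq⟩ φ
    exact hS.preserves_sat φ p q hpq
  · intro h
    exact ⟨_, ccSim_logical_preorder Ar Al Abi trP trQ, h⟩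
end

section
/- If S is a covariant-contravariant simulation between two LTSs and p S q, then for every formula φ ∈ L_CC, p ⊨ φ implies q ⊨ φ. -/
/-- Soundness: if `S` is a covariant-contravariant simulation and `p S q`,
then every formula of `L_CC` satisfied by `p` is satisfied by `q`. -/
theorem ccSim_sound {P Q A : Type} (Ar Al Abi : Set A)
    (trP : P → A → P → Prop) (trQ : Q → A → Q → Prop)
    (S : P → Q → Prop) (hS : CCSim Ar Al Abi trP trQ S)
    (p : P) (q : Q) (hpq : S p q) :
    ∀ φ : LCC A Ar Al Abi, SatCC trP p φ → SatCC trQ q φ := by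
  intro φ
  -- In the modal cases the induction hypothesis is needed at successors of `p` and `q`.
  induction φ generalizing p q with
  | tt => simp [SatCC]
  | ff => simp [SatCC]
  | conj I f ih =>
    simp only [SatCC]
    exact fun h i => ih i p q hpq (h i)
  | disj I f ih =>
    simp only [SatCC]
    rintro ⟨i, h⟩
    exact ⟨i, ih i p q hpq h⟩
  | dia a ha φ ih =>
    simp only [SatCC]
    rintro ⟨p', hp, h⟩
    obtain ⟨q', hq, hs⟩ := (hS p q hpq).1 a ha p' hp
    exact ⟨q', hq, ih p' q' hs h⟩
  | box a ha φ ih =>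
    simp only [SatCC]
    intro h q' hq
    obtain ⟨p', hp, hs⟩ := (hS p q hpq).2 a ha q' hq
    exact ih p' q' hs (h p' hp)
end

section
/- For all processes p and q of labeled transition systems over an alphabet A: p ≲_CS q if and only if p ≼_CS q, i.e., there exists a conformance simulation relating p to q if and only if every formula of L_CS satisfied by p is also satisfied by q. -/
/-!
Formulas are preserved along a conformance simulation by induction on the formula; the clauses of
a conformance simulation are what the modality `aφ` needs.

Conversely, logical preorder is itself a conformance simulation. The formula `a tt` transfers
enabledness of `a`. If some `a`-successor `q'` of `q` were matched by no `a`-successor of `p`,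
each `a`-successor `p'` of `p` would satisfy a formula `φ_p'` that fails at `q'`; then `p`
satisfies `a (⋁ φ_p')`, hence so does `q`, and `q'` satisfies some `φ_p'`, a contradiction.
The disjunction ranges over the successors of `p`, so no image-finiteness is needed.
-/

/-- A conformance simulation between two LTSs with transition relations
`trP` and `trQ`. -/
def CSSim {P Q A : Type} (trP : P → A → P → Prop) (trQ : Q → A → Q → Prop)
    (R : P → Q → Prop) : Prop :=
  ∀ p q, R p q →
    (∀ a : A, (∃ p', trP p a p') → ∃ q', trQ q a q') ∧
    (∀ a : A, ∀ q', trQ q a q' → (∃ p'', trP p a p'') →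
      ∃ p', trP p a p' ∧ R p' q')

/-- The class `L_CS` of conformance simulation formulas: `tt`, set-indexed
conjunctions and disjunctions, and the conformance modality `aφ`. -/
inductive LCS (A : Type) : Type 1 where
  | tt : LCS A
  | conj (I : Type) (f : I → LCS A) : LCS A
  | disj (I : Type) (f : I → LCS A) : LCS A
  | act (a : A) (φ : LCS A) : LCS A

/-- Satisfaction relation for `L_CS`: in particular `p ⊨ aφ` iff `p` has some
`a`-successor and every `a`-successor of `p` satisfies `φ`. -/
def SatCS {P A : Type} (tr : P → A → P → Prop) : P → LCS A → Prop
  | _, .tt => True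
  | p, .conj _ f => ∀ i, SatCS tr p (f i)
  | p, .disj _ f => ∃ i, SatCS tr p (f i)
  | p, .act a φ => (∃ p', tr p a p') ∧ ∀ p', tr p a p' → SatCS tr p' φ

theorem CSSim.sat_of_sat {P Q A : Type} {trP : P → A → P → Prop} {trQ : Q → A → Q → Prop}
    {R : P → Q → Prop} (hR : CSSim trP trQ R) (φ : LCS A) :
    ∀ p q, R p q → SatCS trP p φ → SatCS trQ q φ := by
  induction φ with
  | tt => intro p q _ _; trivial
  | conj I f ih => exact fun p q h hp i => ih i p q h (hp i)
  | disj I f ih => exact fun p q h ⟨i, hp⟩ => ⟨i, ih i p q h hp⟩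
  | act a φ ih =>
    rintro p q h ⟨hex, hall⟩
    refine ⟨(hR p q h).1 a hex, fun q' hq' => ?_⟩
    obtain ⟨p', hp', hr⟩ := (hR p q h).2 a q' hq' hex
    exact ih p' q' hr (hall p' hp')

/-- The logical preorder is a conformance simulation. -/
theorem csSim_logic {P Q A : Type} (trP : P → A → P → Prop) (trQ : Q → A → Q → Prop) :
    CSSim trP trQ (fun p q => ∀ φ : LCS A, SatCS trP p φ → SatCS trQ q φ) := by
  intro p q h
  refine ⟨fun a hex => (h (.act a .tt) ⟨hex, fun _ _ => trivial⟩).1, fun a q' hq' hex => ?_⟩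
  by_contra! hno
  choose f hf hnf using fun x : {p' // trP p a p'} => hno x.1 x.2
  obtain ⟨i, hi⟩ := (h (.act a (.disj _ f)) ⟨hex, fun p' hp' => ⟨⟨p', hp'⟩, hf ⟨p', hp'⟩⟩⟩).2 q' hq'
  exact hnf i hi

/-- Logical characterization of conformance simulation: `p ≲_CS q` iff every
formula of `L_CS` satisfied by `p` is satisfied by `q`. -/
theorem csSim_iff_logic {P Q A : Type}
    (trP : P → A → P → Prop) (trQ : Q → A → Q → Prop) (p : P) (q : Q) :
    (∃ R, CSSim trP trQ R ∧ R p q) ↔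
      (∀ φ : LCS A, SatCS trP p φ → SatCS trQ q φ) := by
  constructor
  · rintro ⟨R, hR, h⟩ φ
    exact hR.sat_of_sat φ p q h
  · exact fun h => ⟨_, csSim_logic trP trQ, h⟩
end

section
/- If R is a conformance simulation between two LTSs and p R q, then for every formula φ ∈ L_CS, p ⊨ φ implies q ⊨ φ. -/
/-- Soundness: if `R` is a conformance simulation and `p R q`, then every
formula of `L_CS` satisfied by `p` is satisfied by `q`. -/
theorem csSim_sound {P Q A : Type}
    (trP : P → A → P → Prop) (trQ : Q → A → Q → Prop)
    (R : P → Q → Prop) (hR : CSSim trP trQ R) (p : P) (q : Q) (hpq : R p q) :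
    ∀ φ : LCS A, SatCS trP p φ → SatCS trQ q φ := by
  intro φ
  -- The pair of processes varies: the modality passes to related successors.
  induction φ generalizing p q with
  | tt => simp only [SatCS, imp_self]
  | conj I f ih =>
    simp only [SatCS]
    exact fun h i => ih i p q hpq (h i)
  | disj I f ih =>
    simp only [SatCS]
    rintro ⟨i, h⟩
    exact ⟨i, ih i p q hpq h⟩
  | act a φ ih =>
    simp only [SatCS]
    rintro ⟨hp, h⟩
    refine ⟨(hR p q hpq).1 a hp, fun q' hq => ?_⟩
    obtain ⟨p', hp', hr⟩ := (hR p q hpq).2 a q' hq hp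
    exact ih p' q' hr (h p' hp')
end
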